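/- arXiv:2102.05932 — 4 statements merged into one kernel-verified Lean document; each statement's English description precedes it below -/
import Mathlib

section
/- Let N ≥ 2, let l ≥ 1 be an integer, let 0 ≤ α < β < ∞ and μ ∈ ℝ. Suppose v : [α,β] → ℝ is continuously differentiable on [α,β], twice differentiable on (α,β), positive on [α,β], satisfies the radial Sturm–Liouville equation −v''(r) − ((N−1)/r) v'(r) + (l(l+N−2)/r²) v(r) = μ v(r) for all r ∈ (α,β), and satisfies the Neumann boundary conditions v'(α) = 0 and v'(β) = 0. Then v'(r) > 0 for every r ∈ (α,β), and moreover (l(l+N−2)/r² − μ) v(r)² ≥ (l(l+N−2)/β² − μ) v(β)² for every r ∈ (α,β). -/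
open Set

/-- Lemma lem:v: for a positive eigenfunction `v` of the radial
Sturm–Liouville problem with Neumann boundary conditions and `l ≥ 1`, the
derivative `v'` is positive on `(α,β)` and the stated inequality holds. -/
theorem sl_first_eigenfunction_monotone
    (N l : ℕ) (hN : 2 ≤ N) (hl : 1 ≤ l)
    (α β μ : ℝ) (hα : 0 ≤ α) (hαβ : α < β)
    (v v' v'' : ℝ → ℝ)
    (hderiv : ∀ r ∈ Set.Icc α β, HasDerivWithinAt v (v' r) (Set.Icc α β) r)
    (hv'cont : ContinuousOn v' (Set.Icc α β))
    (hderiv2 : ∀ r ∈ Set.Ioo α β, HasDerivAt v' (v'' r) r)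
    (hpos : ∀ r ∈ Set.Icc α β, 0 < v r)
    (heq : ∀ r ∈ Set.Ioo α β,
      -v'' r - ((N : ℝ) - 1) / r * v' r
        + ((l : ℝ) * ((l : ℝ) + (N : ℝ) - 2)) / r ^ 2 * v r = μ * v r)
    (hbα : v' α = 0) (hbβ : v' β = 0) :
    ∀ r ∈ Set.Ioo α β, 0 < v' r ∧
      ((l : ℝ) * ((l : ℝ) + (N : ℝ) - 2) / r ^ 2 - μ) * (v r) ^ 2
        ≥ ((l : ℝ) * ((l : ℝ) + (N : ℝ) - 2) / β ^ 2 - μ) * (v β) ^ 2 := by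
  have hc : 0 < (l : ℝ) * ((l : ℝ) + (N : ℝ) - 2) := by
    have h1 : (1 : ℝ) ≤ l := by exact_mod_cast hl
    have h2 : (2 : ℝ) ≤ N := by exact_mod_cast hN
    exact mul_pos (by linarith) (by linarith)
  set c : ℝ := (l : ℝ) * ((l : ℝ) + (N : ℝ) - 2) with hcdef
  obtain ⟨m, rfl⟩ : ∃ m, N = m + 2 := ⟨N - 2, by omega⟩
  have hq : ∀ x y : ℝ, 0 < x → x < y → c / y ^ 2 < c / x ^ 2 := by
    intro x y hx hxy
    apply div_lt_div_of_pos_left hc (by positivity)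
    exact pow_lt_pow_left₀ hxy hx.le (by norm_num)
  have hwc : ContinuousOn (fun r => r ^ (m + 1) * v' r) (Set.Icc α β) :=
    (continuousOn_id.pow (m + 1)).mul hv'cont
  have hwd : ∀ r ∈ Set.Ioo α β, HasDerivAt (fun r => r ^ (m + 1) * v' r)
      (r ^ (m + 1) * ((c / r ^ 2 - μ) * v r)) r := by
    intro r hr
    have hr0 : 0 < r := lt_of_le_of_lt hα hr.1
    have h := (hasDerivAt_pow (m + 1) r).mul (hderiv2 r hr)
    have e := heq r hr
    have e2 : v'' r = (c / r ^ 2 - μ) * v r - ((m : ℝ) + 1) / r * v' r := by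
      push_cast at e
      have : ((m : ℝ) + 2 - 1) = m + 1 := by ring
      rw [this] at e
      linarith
    refine h.congr_deriv ?_
    rw [e2]
    have : r ^ (m + 1) * (((m : ℝ) + 1) / r * v' r) = ((m : ℝ) + 1) * r ^ m * v' r := by
      field_simp
      ring
    rw [Nat.add_sub_cancel]
    push_cast
    rw [mul_sub, this]
    ring
  -- strictly increasing where the potential is positive
  have hinc : ∀ s ∈ Set.Ioc α β, 0 ≤ c / s ^ 2 - μ → 0 < s ^ (m + 1) * v' s := by
    intro s hs hqs
    have hm : StrictMonoOn (fun r => r ^ (m + 1) * v' r) (Set.Icc α s) := by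
      apply strictMonoOn_of_deriv_pos (convex_Icc α s)
        (hwc.mono (Set.Icc_subset_Icc_right hs.2))
      intro x hx
      rw [interior_Icc] at hx
      have hx' : x ∈ Set.Ioo α β := ⟨hx.1, lt_of_lt_of_le hx.2 hs.2⟩
      have hx0 : 0 < x := lt_of_le_of_lt hα hx.1
      rw [(hwd x hx').deriv]
      have h1 := hq x s hx0 hx.2
      have h2 := hpos x (Set.Ioo_subset_Icc_self hx')
      exact mul_pos (by positivity) (mul_pos (by linarith) h2)
    have h := hm (Set.left_mem_Icc.2 hs.1.le) (Set.right_mem_Icc.2 hs.1.le) hs.1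
    simpa [hbα] using h
  have hqβ : c / β ^ 2 - μ < 0 := by
    by_contra hcon
    have h := hinc β ⟨hαβ, le_rfl⟩ (not_lt.1 hcon)
    simp [hbβ] at h
  have hv'pos : ∀ r ∈ Set.Ioo α β, 0 < v' r := by
    intro s hs
    have hs0 : 0 < s := lt_of_le_of_lt hα hs.1
    suffices h : 0 < s ^ (m + 1) * v' s from pos_of_mul_pos_right h (by positivity)
    rcases le_or_gt 0 (c / s ^ 2 - μ) with hqs | hqs
    · exact hinc s ⟨hs.1, hs.2.le⟩ hqs
    · have hm : StrictAntiOn (fun r => r ^ (m + 1) * v' r) (Set.Icc s β) := by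
        apply strictAntiOn_of_deriv_neg (convex_Icc s β)
          (hwc.mono (Set.Icc_subset_Icc_left hs.1.le))
        intro x hx
        rw [interior_Icc] at hx
        have hx' : x ∈ Set.Ioo α β := ⟨hs.1.trans hx.1, hx.2⟩
        have hx0 : 0 < x := hs0.trans hx.1
        rw [(hwd x hx').deriv]
        have h1 := hq s x hs0 hx.1
        have h2 := hpos x (Set.Ioo_subset_Icc_self hx')
        exact mul_neg_of_pos_of_neg (by positivity)
          (mul_neg_of_neg_of_pos (by linarith) h2)
      have h := hm (Set.left_mem_Icc.2 hs.2.le) (Set.right_mem_Icc.2 hs.2.le) hs.2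
      simpa [hbβ] using h
  have hvm : MonotoneOn v (Set.Icc α β) := by
    apply monotoneOn_of_hasDerivWithinAt_nonneg (f' := v') (convex_Icc α β)
      (fun r hr => (hderiv r hr).continuousWithinAt)
    · intro x hx
      exact (hderiv x (interior_subset hx)).mono interior_subset
    · intro x hx
      rw [interior_Icc] at hx
      exact (hv'pos x hx).le
  intro r hr
  refine ⟨hv'pos r hr, ?_⟩
  have hr0 : 0 < r := lt_of_le_of_lt hα hr.1
  have h1 := hq r β hr0 hr.2
  have h2 := hpos r (Set.Ioo_subset_Icc_self hr)
  have h3 : v r ≤ v β :=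
    hvm (Set.Ioo_subset_Icc_self hr) (Set.right_mem_Icc.2 hαβ.le) hr.2.le
  have h4 : v r ^ 2 ≤ v β ^ 2 := pow_le_pow_left₀ h2.le h3 2
  calc (c / β ^ 2 - μ) * v β ^ 2 ≤ (c / β ^ 2 - μ) * v r ^ 2 :=
        mul_le_mul_of_nonpos_left h4 hqβ.le
    _ ≤ (c / r ^ 2 - μ) * v r ^ 2 :=
        mul_le_mul_of_nonneg_right (by linarith) (by positivity)
end

section
/- Let N ≥ 2, let 0 ≤ α < β < ∞ and μ > 0. Suppose v : [α,β] → ℝ is continuously differentiable, the function r ↦ r^{N−1} v'(r) is differentiable on (α,β) with (r^{N−1} v'(r))' = −μ r^{N−1} v(r) for all r ∈ (α,β), and v'(α) = v'(β) = 0. Suppose moreover that there exists γ ∈ (α,β) such that v > 0 on (α,γ), v(γ) = 0 and v < 0 on (γ,β). Then v'(s) < 0 for every s ∈ (α,β); in particular v' does not vanish on (α,β). -/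
open Set

/-- Lemma lem:2ev: a second radial Neumann eigenfunction `v`
(positive then negative, with one interior zero) has `v' < 0` throughout `(α,β)`;
in particular `v'` does not vanish on `(α,β)`. -/
theorem second_radial_eigenfunction_derivative_negative
    (N : ℕ) (hN : 2 ≤ N)
    (α β μ : ℝ) (hα : 0 ≤ α) (hαβ : α < β) (hμ : 0 < μ)
    (v v' : ℝ → ℝ)
    (hderiv : ∀ r ∈ Set.Icc α β, HasDerivWithinAt v (v' r) (Set.Icc α β) r)
    (hv'cont : ContinuousOn v' (Set.Icc α β))
    (hode : ∀ r ∈ Set.Ioo α β,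
      HasDerivAt (fun s : ℝ => s ^ (N - 1) * v' s) (-μ * r ^ (N - 1) * v r) r)
    (hbα : v' α = 0) (hbβ : v' β = 0)
    (γ : ℝ) (hγ : γ ∈ Set.Ioo α β)
    (hpos : ∀ r ∈ Set.Ioo α γ, 0 < v r) (hγ0 : v γ = 0)
    (hneg : ∀ r ∈ Set.Ioo γ β, v r < 0) :
    ∀ s ∈ Set.Ioo α β, v' s < 0 := by
  obtain ⟨h1, h2⟩ := hγ
  have hc : ContinuousOn (fun s : ℝ => s ^ (N - 1) * v' s) (Set.Icc α β) :=
    (continuous_pow (N - 1)).continuousOn.mul hv'cont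
  have hanti : StrictAntiOn (fun s : ℝ => s ^ (N - 1) * v' s) (Set.Icc α γ) := by
    apply strictAntiOn_of_deriv_neg (convex_Icc _ _)
      (hc.mono (Set.Icc_subset_Icc_right h2.le))
    intro x hx
    rw [interior_Icc] at hx
    rw [(hode x ⟨hx.1, hx.2.trans h2⟩).deriv]
    have hx0 : 0 < x := lt_of_le_of_lt hα hx.1
    have := mul_pos (mul_pos hμ (pow_pos hx0 (N - 1))) (hpos x hx)
    linarith
  have hmono : StrictMonoOn (fun s : ℝ => s ^ (N - 1) * v' s) (Set.Icc γ β) := by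
    apply strictMonoOn_of_deriv_pos (convex_Icc _ _)
      (hc.mono (Set.Icc_subset_Icc_left h1.le))
    intro x hx
    rw [interior_Icc] at hx
    rw [(hode x ⟨h1.trans hx.1, hx.2⟩).deriv]
    have hx0 : 0 < x := lt_of_le_of_lt hα (h1.trans hx.1)
    have := mul_pos (mul_pos hμ (pow_pos hx0 (N - 1))) (neg_pos.mpr (hneg x hx))
    linarith
  intro s hs
  have hs0 : 0 < s ^ (N - 1) := pow_pos (lt_of_le_of_lt hα hs.1) _
  have hw : s ^ (N - 1) * v' s < 0 := by
    rcases le_total s γ with h | h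
    · have := hanti ⟨le_rfl, h1.le⟩ ⟨hs.1.le, h⟩ hs.1
      simpa [hbα] using this
    · have := hmono ⟨h, hs.2.le⟩ ⟨h2.le, le_rfl⟩ hs.2
      simpa [hbβ] using this
  by_contra hcon
  have := mul_nonneg hs0.le (not_lt.mp hcon)
  linarith
end

section
/- Let N ≥ 2, let 0 ≤ α < β < ∞ and μ ∈ ℝ. Suppose v : [α,β] → ℝ is continuously differentiable on [α,β], three times differentiable on (α,β), and satisfies −v''(r) − ((N−1)/r) v'(r) = μ v(r) for all r ∈ (α,β). Then u := v' satisfies −u''(r) − ((N−1)/r) u'(r) + ((N−1)/r²) u(r) = μ u(r) for all r ∈ (α,β); moreover, if in addition v'(α) = v'(β) = 0, then u satisfies the Dirichlet boundary conditions u(α) = u(β) = 0. -/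
open Set

/-- differentiating the radial equation with `l = 0` shows that
`u := v'` satisfies the radial equation with `l = 1`; moreover, if `v` satisfies
Neumann boundary conditions then `u` satisfies Dirichlet boundary conditions. -/
theorem derivative_satisfies_l_one_equation
    (N : ℕ) (hN : 2 ≤ N)
    (α β μ : ℝ) (hα : 0 ≤ α) (hαβ : α < β)
    (v v' v'' v''' : ℝ → ℝ)
    (hderiv : ∀ r ∈ Set.Icc α β, HasDerivWithinAt v (v' r) (Set.Icc α β) r)
    (hv'cont : ContinuousOn v' (Set.Icc α β))
    (hderiv2 : ∀ r ∈ Set.Ioo α β, HasDerivAt v' (v'' r) r)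
    (hderiv3 : ∀ r ∈ Set.Ioo α β, HasDerivAt v'' (v''' r) r)
    (heq : ∀ r ∈ Set.Ioo α β, -v'' r - ((N : ℝ) - 1) / r * v' r = μ * v r) :
    (∀ r ∈ Set.Ioo α β,
      -v''' r - ((N : ℝ) - 1) / r * v'' r + ((N : ℝ) - 1) / r ^ 2 * v' r
        = μ * v' r) ∧
    (v' α = 0 → v' β = 0 → v' α = 0 ∧ v' β = 0) := by
  refine ⟨fun r hr => ?_, fun h1 h2 => ⟨h1, h2⟩⟩
  have hr0 : r ≠ 0 := (lt_of_le_of_lt hα hr.1).ne'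
  have hv : HasDerivAt v (v' r) r :=
    (hderiv r (Set.Ioo_subset_Icc_self hr)).hasDerivAt (Icc_mem_nhds hr.1 hr.2)
  have hq : HasDerivAt (fun x : ℝ => ((N : ℝ) - 1) * x⁻¹) (((N : ℝ) - 1) * (-(r ^ 2)⁻¹)) r :=
    (hasDerivAt_inv hr0).const_mul _
  have hL : HasDerivAt (fun x => -v'' x - ((N : ℝ) - 1) * x⁻¹ * v' x)
      (-v''' r - (((N : ℝ) - 1) * (-(r ^ 2)⁻¹) * v' r + ((N : ℝ) - 1) * r⁻¹ * v'' r)) r :=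
    (hderiv3 r hr).neg.sub (hq.mul (hderiv2 r hr))
  have hR : HasDerivAt (fun x => μ * v x) (μ * v' r) r := hv.const_mul μ
  have he : (fun x => μ * v x) =ᶠ[nhds r] (fun x => -v'' x - ((N : ℝ) - 1) * x⁻¹ * v' x) := by
    filter_upwards [Ioo_mem_nhds hr.1 hr.2] with x hx
    rw [← heq x hx, div_eq_mul_inv]
  rw [← (hL.congr_of_eventuallyEq he).unique hR]
  simp only [div_eq_mul_inv]
  ring
end

section
/- Let N ≥ 2, let l ≥ 1 be an integer, let 0 ≤ α < β < ∞ and μ ∈ ℝ. Suppose v : [α,β] → ℝ is continuously differentiable on [α,β], twice differentiable on (α,β), positive on [α,β], satisfies −v''(r) − ((N−1)/r) v'(r) + (l(l+N−2)/r²) v(r) = μ v(r) for all r ∈ (α,β), and v'(α) = v'(β) = 0. Define G : (α,∞) → ℝ by G(r) = v(r) for r ∈ (α,β] and G(r) = v(β) for r ≥ β (so G is C¹ and G'(r) = 0 for r > β). Let Ω ⊂ ℝ^N be a bounded domain such that the Lebesgue measure of Ω ∩ closure(B_α) is zero and |Ω| = |B_β \ closure(B_α)|. Then ∫_Ω ( G'(|x|)²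 + l(l+N−2) G(|x|)² / |x|² ) dx ≤ μ ∫_Ω G(|x|)² dx, and equality holds if and only if Ω coincides with B_β \ closure(B_α) up to a set of Lebesgue measure zero. -/
open MeasureTheory Set

lemma aux_meas {E : Type*} [MeasurableSpace E] (ν : Measure E) (Ω A : Set E)
    (hΩ : MeasurableSet Ω) (hA : MeasurableSet A) (h : E → ℝ) (k : ℝ)
    (hfin : ν A ≠ ⊤) (hvol : ν Ω = ν A)
    (iΩ : IntegrableOn h Ω ν) (iA : IntegrableOn h A ν)
    (hneg : ∀ᵐ x ∂ν, x ∈ Ω \ A → h x < k) (hpos : ∀ᵐ x ∂ν, x ∈ A \ Ω → k < h x) :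
    (∫ x in Ω, h x ∂ν) ≤ ∫ x in A, h x ∂ν ∧
    ((∫ x in Ω, h x ∂ν) = ∫ x in A, h x ∂ν ↔ ν (symmDiff Ω A) = 0) := by
  have hfinΩ : ν Ω ≠ ⊤ := hvol ▸ hfin
  have jΩ : IntegrableOn (fun x => h x - k) Ω ν := iΩ.sub (integrableOn_const hfinΩ)
  have jA : IntegrableOn (fun x => h x - k) A ν := iA.sub (integrableOn_const hfin)
  have e1 : ∫ x in Ω, (h x - k) ∂ν = (∫ x in Ω, h x ∂ν) - ν.real Ω * k := by
    rw [integral_sub iΩ (integrableOn_const hfinΩ)]; simp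
  have e2 : ∫ x in A, (h x - k) ∂ν = (∫ x in A, h x ∂ν) - ν.real A * k := by
    rw [integral_sub iA (integrableOn_const hfin)]; simp
  have er : ν.real Ω = ν.real A := by simp [Measure.real, hvol]
  have s1 := integral_inter_add_sdiff hA jΩ
  have s2 := integral_inter_add_sdiff hΩ jA
  rw [inter_comm] at s2
  have n1 : ∀ᵐ x ∂(ν.restrict (Ω \ A)), h x - k < 0 := by
    rw [ae_restrict_iff' (hΩ.diff hA)]
    filter_upwards [hneg] with x hx hm using by linarith [hx hm]
  have n2 : ∀ᵐ x ∂(ν.restrict (A \ Ω)), 0 < h x - k := by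
    rw [ae_restrict_iff' (hA.diff hΩ)]
    filter_upwards [hpos] with x hx hm using by linarith [hx hm]
  have p1 : ∫ x in Ω \ A, (h x - k) ∂ν ≤ 0 := integral_nonpos_of_ae (n1.mono fun x hx => hx.le)
  have p2 : 0 ≤ ∫ x in A \ Ω, (h x - k) ∂ν := integral_nonneg_of_ae (n2.mono fun x hx => hx.le)
  refine ⟨by rw [er] at e1; linarith, ?_, ?_⟩
  · intro heq
    have q2 : ∫ x in A \ Ω, (h x - k) ∂ν = 0 := by rw [er] at e1; linarith
    rw [integral_eq_zero_iff_of_nonneg_ae (n2.mono fun x hx => hx.le)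
      (jA.mono_set sdiff_subset)] at q2
    have z : ν.restrict (A \ Ω) = 0 := by
      rw [← ae_eq_bot, ← Filter.eventually_false_iff_eq_bot]
      filter_upwards [q2, n2] with x h1 h2
      simp at h1; linarith
    have z2 : ν (A \ Ω) = 0 := Measure.restrict_eq_zero.1 z
    have z1 : ν (Ω \ A) = 0 := by
      have a1 := measure_inter_add_sdiff (μ := ν) Ω hA
      have a2 := measure_inter_add_sdiff (μ := ν) A hΩ
      rw [z2, add_zero, inter_comm] at a2
      rw [a2, hvol] at a1
      have : ν A + ν (Ω \ A) = ν A + 0 := by rw [a1, add_zero]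
      exact (ENNReal.add_right_inj hfin).1 this
    rw [symmDiff_def]
    exact measure_union_null z1 z2
  · intro hz
    exact setIntegral_congr_set (measure_symmDiff_eq_zero_iff.1 hz)

/-- no positive solution reaching the origin -/
lemma aux_zero (n c β μ : ℝ) (hβ : 0 < β) (hc : 0 < c) (v v' v'' : ℝ → ℝ)
    (hv : ContinuousOn v (Icc 0 β)) (hv'cont : ContinuousOn v' (Icc 0 β))
    (hd : ∀ r ∈ Ioo 0 β, HasDerivAt v (v' r) r)
    (hd2 : ∀ r ∈ Ioo 0 β, HasDerivAt v' (v'' r) r)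
    (hpos : ∀ r ∈ Icc 0 β, 0 < v r)
    (heq : ∀ r ∈ Ioo 0 β, v'' r = - n / r * v' r + (c / r ^ 2 - μ) * v r) : False := by
  obtain ⟨m, hm, hmin⟩ := isCompact_Icc.exists_isMinOn (nonempty_Icc.2 hβ.le) hv
  have hvm := hpos m hm
  have hf : ContinuousOn (fun r => r * v' r + (n - 1) * v r) (Icc 0 β) := by fun_prop
  obtain ⟨C, hC⟩ := isCompact_Icc.exists_bound_of_continuousOn hf
  obtain ⟨M, hM⟩ := isCompact_Icc.exists_bound_of_continuousOn hv
  -- f + |μ| β M r - c v m log r is monotone on (0, β)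
  set k := c * v m with hk
  have hkpos : 0 < k := mul_pos hc hvm
  set L := |μ| * β * M with hL
  have hmono : MonotoneOn (fun r => (r * v' r + (n - 1) * v r) + L * r - k * Real.log r)
      (Ioo 0 β) := by
    have hder : ∀ r ∈ Ioo 0 β, HasDerivAt
        (fun r => (r * v' r + (n - 1) * v r) + L * r - k * Real.log r)
        ((1 * v' r + r * v'' r + (n - 1) * v' r) + L * 1 - k * r⁻¹) r := by
      intro r hr
      exact ((((hasDerivAt_id r).mul (hd2 r hr)).add ((hd r hr).const_mul _)).add
        ((hasDerivAt_id r).const_mul L)).sub ((Real.hasDerivAt_log hr.1.ne').const_mul k)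
    refine monotoneOn_of_hasDerivWithinAt_nonneg (convex_Ioo _ _)
      (fun r hr => (hder r hr).continuousAt.continuousWithinAt)
      (fun r hr => (hder r (interior_subset hr)).hasDerivWithinAt) ?_
    intro r hr
    have hr := interior_subset hr
    have hr0 : r ≠ 0 := hr.1.ne'
    have e : 1 * v' r + r * v'' r + (n - 1) * v' r + L * 1 - k * r⁻¹
        = c * (v r - v m) / r + (L - μ * r * v r) := by
      rw [heq r hr, hk]; field_simp; ring
    rw [e]
    have h1 : 0 ≤ c * (v r - v m) / r :=
      div_nonneg (mul_nonneg hc.le (sub_nonneg.2 (hmin (Ioo_subset_Icc_self hr)))) hr.1.le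
    have h2 : μ * r * v r ≤ L := by
      have hvr := hpos r (Ioo_subset_Icc_self hr)
      have hb := hM r (Ioo_subset_Icc_self hr)
      rw [Real.norm_eq_abs, abs_of_pos hvr] at hb
      rw [hL]
      have := hr.1; have := hr.2
      have := le_abs_self μ
      gcongr
    linarith
  set f := fun r => r * v' r + (n - 1) * v r with hfdef
  -- evaluate at small ε
  set B := f (β/2) + L * (β/2) - k * Real.log (β/2) with hB
  have hlog := Real.tendsto_log_nhdsGT_zero.eventually (Filter.eventually_lt_atBot
    ((-C - |L| * β - B) / k))
  have h2 : ∀ᶠ ε in nhdsWithin (0:ℝ) (Ioi 0), ε ∈ Ioo 0 (β/2) := Ioo_mem_nhdsGT (by linarith)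
  obtain ⟨ε, h3, h4⟩ := (hlog.and h2).exists
  have hεm : ε ∈ Ioo 0 β := ⟨h4.1, by linarith [h4.2]⟩
  have h5 := hmono hεm ⟨by linarith, by linarith⟩ h4.2.le
  have h6 := hC ε (Ioo_subset_Icc_self hεm)
  rw [Real.norm_eq_abs] at h6
  have h6 := (abs_le.1 h6).1
  rw [lt_div_iff₀ hkpos] at h3
  have h7 : -(|L| * β) ≤ L * ε := by
    have : |L * ε| ≤ |L| * β := by
      rw [abs_mul, abs_of_pos h4.1]; gcongr; exact hεm.2.le
    linarith [(abs_le.1 this).1]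
  simp only [hB, hfdef] at *
  linarith

lemma aux_ode (n : ℕ) (c α β μ : ℝ) (hα : 0 < α) (hαβ : α < β) (hc : 0 < c) (v v' v'' : ℝ → ℝ)
    (hv : ContinuousOn v (Icc α β)) (hv'cont : ContinuousOn v' (Icc α β))
    (hd : ∀ r ∈ Ioo α β, HasDerivAt v (v' r) r)
    (hd2 : ∀ r ∈ Ioo α β, HasDerivAt v' (v'' r) r)
    (hpos : ∀ r ∈ Icc α β, 0 < v r)
    (heq : ∀ r ∈ Ioo α β, v'' r = - n / r * v' r + (c / r ^ 2 - μ) * v r)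
    (hbα : v' α = 0) (hbβ : v' β = 0) :
    c / β ^ 2 - μ < 0 ∧ (∀ r ∈ Icc α β, v r ≤ v β) ∧
    ∫ r in Ioo α β, r ^ n * (v' r ^ 2 + (c / r ^ 2 - μ) * v r ^ 2) = 0 := by
  have hw : ContinuousOn (fun r => r ^ n * v' r) (Icc α β) := by fun_prop
  have hwd : ∀ r ∈ Ioo α β, HasDerivAt (fun r => r ^ n * v' r)
      (r ^ n * (c / r ^ 2 - μ) * v r) r := by
    intro r hr
    have hr0 : r ≠ 0 := (hα.trans hr.1).ne'
    refine ((hasDerivAt_pow n r).mul (hd2 r hr)).congr_deriv ?_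
    rw [heq r hr]
    rcases n with _ | n
    · simp
    · simp only [Nat.add_sub_cancel, pow_succ]; push_cast; field_simp; ring
  have hdec : ∀ r s : ℝ, 0 < r → r < s → c / s ^ 2 < c / r ^ 2 := by
    intro r s hr hs
    gcongr
  have hneg : c / β ^ 2 - μ < 0 := by
    by_contra! hcon
    have hm : StrictMonoOn (fun r => r ^ n * v' r) (Icc α β) := by
      refine strictMonoOn_of_hasDerivWithinAt_pos (convex_Icc _ _) hw
        (fun r hr => (hwd r (by simpa using hr)).hasDerivWithinAt) ?_
      intro r hr
      have hr : r ∈ Ioo α β := by simpa using hr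
      have := hdec r β (hα.trans hr.1) hr.2
      exact mul_pos (mul_pos (pow_pos (hα.trans hr.1) _) (by linarith))
        (hpos r (Ioo_subset_Icc_self hr))
    have := hm (left_mem_Icc.2 hαβ.le) (right_mem_Icc.2 hαβ.le) hαβ
    simp [hbα, hbβ] at this
  have hw0 : ∀ r ∈ Ioo α β, 0 ≤ r ^ n * v' r := by
    intro r hr
    rcases le_total 0 (c / r ^ 2 - μ) with h | h
    · have hm : MonotoneOn (fun r => r ^ n * v' r) (Icc α r) := by
        refine monotoneOn_of_hasDerivWithinAt_nonneg (convex_Icc _ _)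
          (hw.mono (Icc_subset_Icc_right hr.2.le))
          (fun s hs => (hwd s (by rw [interior_Icc] at hs; exact ⟨hs.1, hs.2.trans hr.2⟩)).hasDerivWithinAt) ?_
        intro s hs
        rw [interior_Icc] at hs
        have := hdec s r (hα.trans hs.1) hs.2
        exact mul_nonneg (mul_nonneg (pow_pos (hα.trans hs.1) _).le (by linarith))
          (hpos s ⟨hs.1.le, (hs.2.trans hr.2).le⟩).le
      have := hm (left_mem_Icc.2 hr.1.le) (right_mem_Icc.2 hr.1.le) hr.1.le
      simpa [hbα] using this
    · have hm : AntitoneOn (fun r => r ^ n * v' r) (Icc r β) := by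
        refine antitoneOn_of_hasDerivWithinAt_nonpos (convex_Icc _ _)
          (hw.mono (Icc_subset_Icc_left hr.1.le))
          (fun s hs => (hwd s (by rw [interior_Icc] at hs; exact ⟨hr.1.trans hs.1, hs.2⟩)).hasDerivWithinAt) ?_
        intro s hs
        rw [interior_Icc] at hs
        have hr0 := hα.trans hr.1
        have := hdec r s hr0 hs.1
        exact mul_nonpos_of_nonpos_of_nonneg
          (mul_nonpos_of_nonneg_of_nonpos (pow_pos (hr0.trans hs.1) _).le (by linarith))
          (hpos s ⟨(hr.1.trans hs.1).le, hs.2.le⟩).le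
      have := hm (left_mem_Icc.2 hr.2.le) (right_mem_Icc.2 hr.2.le) hr.2.le
      simpa [hbβ] using this
  refine ⟨hneg, ?_, ?_⟩
  · have hm : MonotoneOn v (Icc α β) := by
      refine monotoneOn_of_hasDerivWithinAt_nonneg (convex_Icc _ _) hv
        (fun r hr => (hd r (by simpa using hr)).hasDerivWithinAt) ?_
      intro r hr
      have hr : r ∈ Ioo α β := by simpa using hr
      exact nonneg_of_mul_nonneg_right (hw0 r hr) (pow_pos (hα.trans hr.1) _)
    intro r hr
    exact hm hr (right_mem_Icc.2 hαβ.le) hr.2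
  · rw [← integral_Ioc_eq_integral_Ioo, ← intervalIntegral.integral_of_le hαβ.le]
    have hne : ∀ r ∈ Icc α β, r ^ 2 ≠ 0 := fun r hr => by
      have := hα.trans_le hr.1; positivity
    have := intervalIntegral.integral_eq_sub_of_hasDerivAt_of_le hαβ.le
      (f := fun r => (r ^ n * v' r) * v r)
      (f' := fun r => r ^ n * (v' r ^ 2 + (c / r ^ 2 - μ) * v r ^ 2)) (hw.mul hv)
      (fun r hr => ((hwd r hr).mul (hd r hr)).congr_deriv (by ring))
      (by
        apply ContinuousOn.intervalIntegrable_of_Icc hαβ.le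
        have : ContinuousOn (fun r : ℝ => c / r ^ 2) (Icc α β) :=
          continuousOn_const.div (by fun_prop) hne
        fun_prop)
    rw [this]; simp [hbα, hbβ]

theorem rayleigh_bound_constant_extension
    (N l : ℕ) (hN : 2 ≤ N) (hl : 1 ≤ l)
    (α β μ : ℝ) (hα : 0 ≤ α) (hαβ : α < β)
    (v v' v'' : ℝ → ℝ)
    (hderiv : ∀ r ∈ Set.Icc α β, HasDerivWithinAt v (v' r) (Set.Icc α β) r)
    (hv'cont : ContinuousOn v' (Set.Icc α β))
    (hderiv2 : ∀ r ∈ Set.Ioo α β, HasDerivAt v' (v'' r) r)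
    (hpos : ∀ r ∈ Set.Icc α β, 0 < v r)
    (heq : ∀ r ∈ Set.Ioo α β,
      -v'' r - ((N : ℝ) - 1) / r * v' r
        + ((l : ℝ) * ((l : ℝ) + (N : ℝ) - 2)) / r ^ 2 * v r = μ * v r)
    (hbα : v' α = 0) (hbβ : v' β = 0)
    (G G' : ℝ → ℝ)
    (hG : ∀ r : ℝ, G r = if r ≤ β then v r else v β)
    (hG' : ∀ r : ℝ, G' r = if r < β then v' r else 0)
    (Ω : Set (EuclideanSpace ℝ (Fin N)))
    (hopen : IsOpen Ω) (hconn : IsConnected Ω) (hbdd : Bornology.IsBounded Ω)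
    (hin : volume (Ω ∩ closure (Metric.ball (0 : EuclideanSpace ℝ (Fin N)) α)) = 0)
    (hvol : volume Ω =
      volume (Metric.ball (0 : EuclideanSpace ℝ (Fin N)) β \
        closure (Metric.ball (0 : EuclideanSpace ℝ (Fin N)) α))) :
    (∫ x in Ω, ((G' ‖x‖) ^ 2
        + ((l : ℝ) * ((l : ℝ) + (N : ℝ) - 2)) * (G ‖x‖) ^ 2 / ‖x‖ ^ 2))
      ≤ μ * ∫ x in Ω, (G ‖x‖) ^ 2 ∧
    ((∫ x in Ω, ((G' ‖x‖) ^ 2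
        + ((l : ℝ) * ((l : ℝ) + (N : ℝ) - 2)) * (G ‖x‖) ^ 2 / ‖x‖ ^ 2))
      = μ * ∫ x in Ω, (G ‖x‖) ^ 2 ↔
      volume (symmDiff Ω (Metric.ball (0 : EuclideanSpace ℝ (Fin N)) β \
        closure (Metric.ball (0 : EuclideanSpace ℝ (Fin N)) α))) = 0) := by
  set c : ℝ := (l : ℝ) * ((l : ℝ) + (N : ℝ) - 2) with hcdef
  have hc : 0 < c := by
    have h1 : (2:ℝ) ≤ N := by exact_mod_cast hN
    have h2 : (1:ℝ) ≤ l := by exact_mod_cast hl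
    exact mul_pos (by linarith) (by linarith)
  have hv : ContinuousOn v (Icc α β) := fun r hr => (hderiv r hr).continuousWithinAt
  have hd : ∀ r ∈ Ioo α β, HasDerivAt v (v' r) r := fun r hr =>
    (hderiv r (Ioo_subset_Icc_self hr)).hasDerivAt (Icc_mem_nhds hr.1 hr.2)
  obtain ⟨n, rfl⟩ : ∃ n, N = n + 1 := ⟨N - 1, by omega⟩
  have heq' : ∀ r ∈ Ioo α β, v'' r = - (n:ℝ) / r * v' r + (c / r ^ 2 - μ) * v r := by
    intro r hr
    have := heq r hr
    push_cast at this
    have e : ((n:ℝ) + 1 - 1) = n := by ring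
    rw [e] at this
    rw [neg_div]
    linarith
  rcases hα.eq_or_lt with h0 | hα
  · subst h0
    exact (aux_zero n c β μ hαβ hc v v' v'' hv hv'cont hd hderiv2 hpos heq').elim
  obtain ⟨hneg, hvle, hint⟩ := aux_ode n c α β μ hα hαβ hc v v' v'' hv hv'cont hd hderiv2 hpos
    heq' hbα hbβ
  have hβ : 0 < β := hα.trans hαβ
  have hGm : ∀ r, G r = v (min r β) := by
    intro r; rw [hG]; split_ifs with h
    · rw [min_eq_left h]
    · rw [min_eq_right (not_le.1 h).le]
  have hGm' : ∀ r, G' r = v' (min r β) := by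
    intro r; rw [hG']; split_ifs with h
    · rw [min_eq_left h.le]
    · rw [min_eq_right (not_lt.1 h), hbβ]
  have hmaps : MapsTo (fun r : ℝ => min r β) (Ici α) (Icc α β) := fun r hr =>
    ⟨le_min hr hαβ.le, min_le_right _ _⟩
  have hminc : ContinuousOn (fun r : ℝ => min r β) (Ici α) := by fun_prop
  have cG : ContinuousOn G (Ici α) := (hv.comp hminc hmaps).congr fun r _ => hGm r
  have cG' : ContinuousOn G' (Ici α) := (hv'cont.comp hminc hmaps).congr fun r _ => hGm' r
  rw [closure_ball (0 : (EuclideanSpace ℝ (Fin (n + 1)))) hα.ne'] at hin hvol ⊢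
  set A : Set (EuclideanSpace ℝ (Fin (n + 1))) := Metric.ball (0 : (EuclideanSpace ℝ (Fin (n + 1)))) β \ Metric.closedBall 0 α with hA
  have memA : ∀ x : (EuclideanSpace ℝ (Fin (n + 1))), x ∈ A ↔ α < ‖x‖ ∧ ‖x‖ < β := by
    intro x; simp [hA, and_comm]
  -- integrability
  have key : ∀ (f : ℝ → ℝ), ContinuousOn f (Ici α) → ∀ S : Set (EuclideanSpace ℝ (Fin (n + 1))), Bornology.IsBounded S →
      volume (S ∩ Metric.closedBall (0 : (EuclideanSpace ℝ (Fin (n + 1)))) α) = 0 → IntegrableOn (fun x => f ‖x‖) S := by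
    intro f hf S hS hS0
    obtain ⟨R, hR⟩ := hS.subset_closedBall (0 : (EuclideanSpace ℝ (Fin (n + 1))))
    have hK : IsCompact (Metric.closedBall (0 : (EuclideanSpace ℝ (Fin (n + 1)))) R ∩ {x | α ≤ ‖x‖}) :=
      (isCompact_closedBall _ _).inter_right (isClosed_le continuous_const continuous_norm)
    have : IntegrableOn (fun x : (EuclideanSpace ℝ (Fin (n + 1))) => f ‖x‖) (Metric.closedBall (0 : (EuclideanSpace ℝ (Fin (n + 1)))) R ∩ {x | α ≤ ‖x‖}) :=
      (hf.comp continuous_norm.continuousOn (fun x hx => hx.2)).integrableOn_compact hK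
    refine this.mono_set_ae ?_
    have hz : ∀ᵐ x ∂(volume : Measure (EuclideanSpace ℝ (Fin (n + 1)))), x ∉ S ∩ Metric.closedBall (0 : (EuclideanSpace ℝ (Fin (n + 1)))) α :=
      measure_eq_zero_iff_ae_notMem.1 hS0
    filter_upwards [hz] with x hx hxS
    refine ⟨hR hxS, ?_⟩
    by_contra hcon
    exact hx ⟨hxS, by simp at hcon ⊢; exact hcon.le⟩
  have cinv : ContinuousOn (fun r : ℝ => c * G r ^ 2 / r ^ 2) (Ici α) :=
    (continuousOn_const.mul (cG.pow 2)).div (by fun_prop) fun r hr => by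
      have := hα.trans_le hr; positivity
  set H : ℝ → ℝ := fun r => (G' r ^ 2 + c * G r ^ 2 / r ^ 2) - μ * G r ^ 2 with hH
  have cF : ContinuousOn (fun r => G' r ^ 2 + c * G r ^ 2 / r ^ 2) (Ici α) := (cG'.pow 2).add cinv
  have cG2 : ContinuousOn (fun r => G r ^ 2) (Ici α) := cG.pow 2
  have cH : ContinuousOn H (Ici α) := cF.sub (continuousOn_const.mul cG2)
  have hAb : Bornology.IsBounded A := Metric.isBounded_ball.subset sdiff_subset
  have hA0 : volume (A ∩ Metric.closedBall (0 : (EuclideanSpace ℝ (Fin (n + 1)))) α) = 0 := by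
    rw [hA, sdiff_inter_self]; simp
  have hAm : MeasurableSet A := measurableSet_ball.diff measurableSet_closedBall
  have hiA : ∫ x in A, H ‖x‖ = 0 := by
    have h1 := integral_fun_norm_addHaar (volume : Measure (EuclideanSpace ℝ (Fin (n + 1)))) ((Ioo α β).indicator H)
    have h2 : (fun x : (EuclideanSpace ℝ (Fin (n + 1))) => (Ioo α β).indicator H ‖x‖) = A.indicator (fun x => H ‖x‖) := by
      ext x
      by_cases hx : x ∈ A
      · rw [indicator_of_mem hx, indicator_of_mem (show ‖x‖ ∈ Ioo α β from (memA x).1 hx)]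
      · rw [indicator_of_notMem hx, indicator_of_notMem (show ‖x‖ ∉ Ioo α β from fun h => hx ((memA x).2 h))]
    rw [h2, integral_indicator hAm] at h1
    rw [h1]
    have h3 : ∫ y in Ioi (0:ℝ), y ^ (Module.finrank ℝ (EuclideanSpace ℝ (Fin (n + 1))) - 1) • (Ioo α β).indicator H y = 0 := by
      have e : (fun y : ℝ => y ^ (Module.finrank ℝ (EuclideanSpace ℝ (Fin (n + 1))) - 1) • (Ioo α β).indicator H y)
          = (Ioo α β).indicator (fun r => r ^ n * (v' r ^ 2 + (c / r ^ 2 - μ) * v r ^ 2)) := by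
        ext y
        by_cases hy : y ∈ Ioo α β
        · rw [indicator_of_mem hy, indicator_of_mem hy]
          simp only [finrank_euclideanSpace_fin, Nat.add_sub_cancel, smul_eq_mul, hH, hGm, hGm',
            min_eq_left hy.2.le]
          ring
        · rw [indicator_of_notMem hy, indicator_of_notMem hy]; simp
      rw [e, setIntegral_indicator measurableSet_Ioo, inter_eq_right.2, hint]
      exact fun r hr => hα.trans hr.1
    rw [h3]; simp
  have hdec : ∀ r s : ℝ, 0 < r → r < s → c / s ^ 2 < c / r ^ 2 := by
    intro r s hr hs
    gcongr
  have hvβ := hpos β (right_mem_Icc.2 hαβ.le)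
  have hz1 : ∀ᵐ x ∂(volume : Measure (EuclideanSpace ℝ (Fin (n + 1)))), x ∉ Ω ∩ Metric.closedBall (0 : (EuclideanSpace ℝ (Fin (n + 1)))) α :=
    measure_eq_zero_iff_ae_notMem.1 hin
  have hz2 : ∀ᵐ x ∂(volume : Measure (EuclideanSpace ℝ (Fin (n + 1)))), x ∉ Metric.sphere (0 : (EuclideanSpace ℝ (Fin (n + 1)))) β :=
    measure_eq_zero_iff_ae_notMem.1 (Measure.addHaar_sphere _ _ _)
  have main := aux_meas (volume : Measure (EuclideanSpace ℝ (Fin (n + 1)))) Ω A hopen.measurableSet hAm (fun x => H ‖x‖)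
    ((c / β ^ 2 - μ) * v β ^ 2) hAb.measure_lt_top.ne hvol (key H cH Ω hbdd hin)
    (key H cH A hAb hA0)
    (by
      filter_upwards [hz1, hz2] with x h1 h2 hx
      have h3 : α < ‖x‖ := by
        by_contra hcon
        exact h1 ⟨hx.1, by simpa using hcon⟩
      have h4 : β < ‖x‖ := by
        by_contra hcon
        rcases (not_lt.1 hcon).lt_or_eq with h | h
        · exact hx.2 ((memA x).2 ⟨h3, h⟩)
        · exact h2 (by simpa using h)
      have h5 := hdec β ‖x‖ hβ h4
      simp only [hH, hGm, hGm', min_eq_right h4.le, hbβ]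
      have h6 : (c / ‖x‖ ^ 2 - μ) * v β ^ 2 < (c / β ^ 2 - μ) * v β ^ 2 := by
        gcongr
      calc _ = (c / ‖x‖ ^ 2 - μ) * v β ^ 2 := by ring
        _ < _ := h6)
    (by
      refine Filter.Eventually.of_forall fun x hx => ?_
      obtain ⟨h3, h4⟩ := (memA x).1 hx.1
      have h5 := hdec ‖x‖ β (hα.trans h3) h4
      have hvx := hpos ‖x‖ ⟨h3.le, h4.le⟩
      have hsq : v ‖x‖ ^ 2 ≤ v β ^ 2 := by
        have := hvle ‖x‖ ⟨h3.le, h4.le⟩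
        gcongr
      simp only [hH, hGm, hGm', min_eq_left h4.le]
      have h6 : (c / β ^ 2 - μ) * v β ^ 2 < (c / ‖x‖ ^ 2 - μ) * v ‖x‖ ^ 2 := by
        calc (c / β ^ 2 - μ) * v β ^ 2 ≤ (c / β ^ 2 - μ) * v ‖x‖ ^ 2 :=
              mul_le_mul_of_nonpos_left hsq hneg.le
          _ < _ := by gcongr
      calc _ < (c / ‖x‖ ^ 2 - μ) * v ‖x‖ ^ 2 := h6
        _ ≤ v' ‖x‖ ^ 2 + (c / ‖x‖ ^ 2 - μ) * v ‖x‖ ^ 2 := by linarith [sq_nonneg (v' ‖x‖)]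
        _ = _ := by ring)
  have hsub : ∫ x in Ω, H ‖x‖ = (∫ x in Ω, (G' ‖x‖ ^ 2 + c * G ‖x‖ ^ 2 / ‖x‖ ^ 2))
      - μ * ∫ x in Ω, G ‖x‖ ^ 2 := by
    rw [← integral_const_mul]
    exact integral_sub (key _ cF Ω hbdd hin) ((key _ cG2 Ω hbdd hin).const_mul μ)
  simp only [hiA] at main
  rw [hsub] at main
  exact ⟨by linarith [main.1], by rw [← main.2, sub_eq_zero]⟩
end
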